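/- Let I₀, …, I_m be ideals of ℂ[x₁, x₂], each of finite colength with monomial lexicographic initial ideal M_{Δⱼ} (lex order with x₁ > x₂), such that each S/Iⱼ is supported at a single point (λⱼ, 0) on the x₁-axis with the λⱼ pairwise distinct. Then the lexicographic initial ideal of I := I₀ ∩ ⋯ ∩ I_m is the monomial ideal M_Δ, where Δ is the C4 sum in the first direction Δ₀ +₁ ⋯ +₁ Δ_m. -/

import Mathlib

def IsStandardSet (Δ : Set (ℕ × ℕ)) : Prop :=
  ∀ γ : ℕ × ℕ, γ ∉ Δ → ∀ δ : ℕ × ℕ, γ + δ ∉ Δ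

/-- The pair of exponents of a monomial of `ℂ[x₁, x₂]`, with `x₁ = X 0`, `x₂ = X 1`. -/
def expPair (d : Fin 2 →₀ ℕ) : ℕ × ℕ := (d 0, d 1)

/-- The set of lexicographic leading exponents (lex order with `x₁ > x₂`) of the nonzero
elements of an ideal `I ⊆ ℂ[x₁, x₂]`.  One has `in_lex(I) = M_Δ` exactly when this set is
the complement of the standard set `Δ`. -/
def leadSet (I : Ideal (MvPolynomial (Fin 2) ℂ)) : Set (ℕ × ℕ) :=
  {α | ∃ f ∈ I, f ≠ 0 ∧ (∃ d ∈ f.support, expPair d = α) ∧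
    ∀ d ∈ f.support, toLex (expPair d) ≤ toLex α}

/-- The vanishing set in `𝔸²(ℂ)` of an ideal of `ℂ[x₁, x₂]`. -/
def zeroSet (I : Ideal (MvPolynomial (Fin 2) ℂ)) : Set (ℂ × ℂ) :=
  {z | ∀ f ∈ I, MvPolynomial.eval ![z.1, z.2] f = 0}

namespace C4

open Polynomial

noncomputable section

/-- `T I k b`: `I` has an element of `x`-degree at most `k` with `x^k`-coefficient `y^b`. -/
def T (I : Ideal ℂ[X][X]) (k b : ℕ) : Prop :=
  ∃ F ∈ I, F.natDegree ≤ k ∧ F.coeff k = X ^ b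

theorem T.mono_right {I : Ideal ℂ[X][X]} {k b b' : ℕ} (h : T I k b) (hb : b ≤ b') : T I k b' := by
  obtain ⟨F, hF, hd, hc⟩ := h
  refine ⟨Polynomial.C (X ^ (b' - b)) * F, I.mul_mem_left _ hF,
    (natDegree_C_mul_le _ _).trans hd, ?_⟩
  rw [coeff_C_mul, hc, ← pow_add]
  congr 1
  omega

theorem T.mono_left {I : Ideal ℂ[X][X]} {k k' b : ℕ} (h : T I k b) (hk : k ≤ k') : T I k' b := by
  obtain ⟨F, hF, hd, hc⟩ := h
  refine ⟨F * X ^ (k' - k), I.mul_mem_right _ hF, ?_, ?_⟩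
  · refine natDegree_mul_le.trans ?_
    rw [natDegree_X_pow]
    omega
  · obtain ⟨d, rfl⟩ := Nat.exists_eq_add_of_le hk
    rw [Nat.add_sub_cancel_left, coeff_mul_X_pow, hc]

theorem decomp (p : ℂ[X]) (hp : p ≠ 0) (N : ℕ) :
    ∃ b u, p = X ^ b * u ∧ IsCoprime u (X ^ N) ∧ b ≤ p.natDegree := by
  obtain ⟨u, hu, hnd⟩ := exists_eq_pow_rootMultiplicity_mul_and_not_dvd p hp 0
  refine ⟨rootMultiplicity 0 p, u, ?_, ?_, ?_⟩
  · simpa using hu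
  · apply IsCoprime.pow_right
    rw [map_zero, sub_zero] at hnd
    exact ((irreducible_X.coprime_iff_not_dvd).2 hnd).symm
  · rw [← count_roots]
    exact (Multiset.count_le_card _ _).trans (card_roots' p)

theorem T_of_mem {I : Ideal ℂ[X][X]} {N : ℕ} (hN : Polynomial.C (X ^ N) ∈ I)
    {F : ℂ[X][X]} (hF : F ∈ I) {k : ℕ} (hd : F.natDegree ≤ k) (h0 : F.coeff k ≠ 0) :
    ∃ b ≤ (F.coeff k).natDegree, X ^ b ∣ F.coeff k ∧ T I k b := by
  obtain ⟨b, u, hp, ⟨a, c, hac⟩, hb⟩ := decomp _ h0 N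
  refine ⟨b, hb, ⟨u, hp⟩, Polynomial.C a * F + Polynomial.C (c * X ^ b) * X ^ k * Polynomial.C (X ^ N),
    I.add_mem (I.mul_mem_left _ hF) (I.mul_mem_left _ hN), ?_, ?_⟩
  · refine natDegree_add_le_of_degree_le ((natDegree_C_mul_le _ _).trans hd) ?_
    refine (natDegree_mul_C_le _ _).trans ?_
    exact natDegree_C_mul_X_pow_le _ _
  · rw [coeff_add, coeff_C_mul, coeff_mul_C, coeff_C_mul_X_pow, if_pos rfl, hp]
    linear_combination X ^ b * hac

theorem dvd_coeff {I : Ideal ℂ[X][X]} {N : ℕ} (hN : Polynomial.C (X ^ N) ∈ I)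
    {F : ℂ[X][X]} (hF : F ∈ I) {k b : ℕ} (hd : F.natDegree ≤ k)
    (hb : ∀ b' < b, ¬ T I k b') : X ^ b ∣ F.coeff k := by
  by_cases h0 : F.coeff k = 0
  · rw [h0]; exact dvd_zero _
  obtain ⟨b', _, hdv, hT⟩ := T_of_mem hN hF hd h0
  have : b ≤ b' := by
    by_contra h
    exact hb b' (by omega) hT
  exact (pow_dvd_pow _ this).trans hdv

theorem T_N {I : Ideal ℂ[X][X]} {N : ℕ} (hN : Polynomial.C (X ^ N) ∈ I) (k : ℕ) : T I k N := by
  refine T.mono_left ⟨_, hN, ?_, coeff_C_zero⟩ (Nat.zero_le k)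
  rw [natDegree_C]

theorem exists_min {I : Ideal ℂ[X][X]} {k b : ℕ} (h : T I k b) :
    ∃ d ≤ b, T I k d ∧ ∀ d' < d, ¬ T I k d' := by
  classical
  have h' : ∃ b, T I k b := ⟨b, h⟩
  exact ⟨Nat.find h', Nat.find_min' h' h, Nat.find_spec h', fun d' hd' => Nat.find_min h' hd'⟩

/-- Lazard's structure lemma. -/
theorem lazard {I : Ideal ℂ[X][X]} {N : ℕ} (hN : Polynomial.C (X ^ N) ∈ I) (k : ℕ) :
    ∀ b, (∀ b' < b, ¬ T I k b') → ∀ F ∈ I, F.natDegree ≤ k →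
      (Polynomial.C X : ℂ[X][X]) ^ b ∣ F := by
  induction k with
  | zero =>
    intro b hb F hF hd
    have h := dvd_coeff hN hF hd hb
    rw [eq_C_of_natDegree_le_zero hd, ← C_pow]
    exact _root_.map_dvd Polynomial.C h
  | succ k ih =>
    intro b hb F hF hd
    obtain ⟨c, hc⟩ := dvd_coeff hN hF hd hb
    obtain ⟨d, _, ⟨G, hG, hGd, hGc⟩, hmin⟩ := exists_min (T_N hN k)
    have hbd : b ≤ d := by
      by_contra h
      exact hb d (by omega) (T.mono_left ⟨G, hG, hGd, hGc⟩ (Nat.le_succ k))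
    obtain ⟨e, rfl⟩ := Nat.exists_eq_add_of_le hbd
    have hGdvd := ih _ hmin G hG hGd
    have hH : (Polynomial.C X : ℂ[X][X]) ^ (b + e) ∣
        Polynomial.C (X ^ e) * F - Polynomial.C c * X * G := by
      apply ih _ hmin
      · exact I.sub_mem (I.mul_mem_left _ hF) (I.mul_mem_left _ hG)
      · rw [natDegree_le_iff_coeff_eq_zero]
        intro n hn
        obtain ⟨n, rfl⟩ : ∃ n', n = n' + 1 := ⟨n - 1, by omega⟩
        rw [coeff_sub, coeff_C_mul, mul_assoc, coeff_C_mul, coeff_X_mul]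
        rcases Nat.lt_or_ge k n with h | h
        · rw [coeff_eq_zero_of_natDegree_lt (p := F) (by omega),
            coeff_eq_zero_of_natDegree_lt (p := G) (by omega)]
          simp
        · obtain rfl : n = k := by omega
          rw [hc, hGc]
          ring
    have h2 : (Polynomial.C X : ℂ[X][X]) ^ (b + e) ∣ Polynomial.C (X ^ e) * F := by
      have := dvd_add hH (hGdvd.mul_left (Polynomial.C c * X))
      simpa using this
    rw [C_pow, add_comm, pow_add] at h2
    refine (mul_dvd_mul_iff_left ?_).1 h2
    exact pow_ne_zero _ (C_ne_zero.2 X_ne_zero)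

theorem exists_monic {I : Ideal ℂ[X][X]} {N : ℕ} (hN : Polynomial.C (X ^ N) ∈ I) {k b : ℕ}
    (h : T I k b) : ∃ g : ℂ[X][X], g.Monic ∧ g.natDegree = k ∧ Polynomial.C X ^ b * g ∈ I := by
  obtain ⟨d, hdb, ⟨F, hF, hFd, hFc⟩, hmin⟩ := exists_min h
  obtain ⟨g, rfl⟩ := lazard hN k d hmin F hF hFd
  have hX : (X : ℂ[X]) ^ d ≠ 0 := pow_ne_zero _ X_ne_zero
  rw [← C_pow] at hFd hFc hF
  rw [natDegree_C_mul hX] at hFd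
  rw [coeff_C_mul] at hFc
  have h1 : g.coeff k = 1 := by
    apply mul_left_cancel₀ hX
    rw [hFc, mul_one]
  have hdeg : g.natDegree = k :=
    le_antisymm hFd (le_natDegree_of_ne_zero (by rw [h1]; exact one_ne_zero))
  refine ⟨g, ?_, hdeg, ?_⟩
  · rw [Monic, leadingCoeff, hdeg, h1]
  · obtain ⟨e, rfl⟩ := Nat.exists_eq_add_of_le hdb
    have := I.mul_mem_left (Polynomial.C X ^ e) hF
    rw [C_pow] at this
    convert this using 1
    ring

/-- Reduction modulo `y`. -/
def red : ℂ[X][X] →+* ℂ[X] := mapRingHom (evalRingHom 0)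

theorem red_dvd {I : Ideal ℂ[X][X]} {N : ℕ} (hN : Polynomial.C (X ^ N) ∈ I) {r b : ℕ}
    (hr : ∀ k < r, ¬ T I k b) {g : ℂ[X][X]} (hg : g.Monic) (hgd : g.natDegree = r)
    (hgI : Polynomial.C X ^ b * g ∈ I) {G : ℂ[X][X]} (hG : Polynomial.C X ^ b * G ∈ I) :
    red g ∣ red G := by
  by_cases h1 : g = 1
  · rw [h1, map_one]; exact one_dvd _
  have hlt := natDegree_modByMonic_lt G hg h1
  have hdiv := modByMonic_add_div G g
  have hmem : (Polynomial.C X : ℂ[X][X]) ^ b * (G %ₘ g) ∈ I := by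
    have := I.sub_mem hG (I.mul_mem_left (G /ₘ g) hgI)
    convert this using 1
    linear_combination (Polynomial.C X : ℂ[X][X]) ^ b * hdiv
  have hd : (Polynomial.C X : ℂ[X][X]) ^ (b + 1) ∣ Polynomial.C X ^ b * (G %ₘ g) := by
    refine lazard hN (r - 1) (b + 1) ?_ _ hmem ?_
    · intro b' hb' hT
      exact hr (r - 1) (by omega) (hT.mono_right (by omega))
    · rw [← C_pow]
      refine (natDegree_C_mul_le _ _).trans ?_
      omega
  rw [pow_succ] at hd
  have hd2 := (mul_dvd_mul_iff_left (pow_ne_zero b (C_ne_zero.2 (X_ne_zero (R := ℂ))))).1 hd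
  obtain ⟨q, hq⟩ := hd2
  have h0 : red (G %ₘ g) = 0 := by
    rw [hq, map_mul]
    simp [red]
  rw [← hdiv, map_add, h0, zero_add, map_mul]
  exact dvd_mul_right _ _

theorem main {m : ℕ} (I : Fin (m + 1) → Ideal ℂ[X][X]) (lam : Fin (m + 1) → ℂ)
    (hdist : Function.Injective lam) (N : Fin (m + 1) → ℕ)
    (hN : ∀ j, Polynomial.C (X ^ N j) ∈ I j)
    (hN' : ∀ j, ∃ M, (X - Polynomial.C (Polynomial.C (lam j))) ^ M ∈ I j)
    (b : ℕ) (r : Fin (m + 1) → ℕ) (hr : ∀ j k, T (I j) k b ↔ r j ≤ k) (k : ℕ) :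
    T (⨅ j, I j) k b ↔ ∑ j, r j ≤ k := by
  have hg : ∀ j, ∃ g : ℂ[X][X], g.Monic ∧ g.natDegree = r j ∧ Polynomial.C X ^ b * g ∈ I j :=
    fun j => exists_monic (hN j) ((hr j _).2 le_rfl)
  choose g hgm hgd hgI using hg
  have hr' : ∀ j, ∀ k < r j, ¬ T (I j) k b := fun j k hk hT => by
    have := (hr j k).1 hT
    omega
  constructor
  · intro hT
    have hNI : Polynomial.C (X ^ (∑ j, N j)) ∈ ⨅ j, I j := by
      rw [Ideal.mem_iInf]
      intro j
      rw [← Finset.add_sum_erase _ _ (Finset.mem_univ j), pow_add, C_mul]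
      exact (I j).mul_mem_right _ (hN j)
    obtain ⟨G, hGm, hGd, hG⟩ := exists_monic hNI hT
    rw [Ideal.mem_iInf] at hG
    have hdv : ∀ j, red (g j) ∣ red G := fun j =>
      red_dvd (hN j) (hr' j) (hgm j) (hgd j) (hgI j) (hG j)
    have hdv2 : ∀ j, ∃ M, red (g j) ∣ (X - Polynomial.C (lam j)) ^ M := fun j => by
      obtain ⟨M, hM⟩ := hN' j
      refine ⟨M, ?_⟩
      have := red_dvd (hN j) (hr' j) (hgm j) (hgd j) (hgI j) ((I j).mul_mem_left _ hM)
      simpa [red] using this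
    have hcop : Pairwise (Function.onFun IsCoprime fun j => red (g j)) := by
      intro i j hij
      obtain ⟨M, hM⟩ := hdv2 i
      obtain ⟨M', hM'⟩ := hdv2 j
      exact ((pairwise_coprime_X_sub_C hdist hij).pow).of_isCoprime_of_dvd_left hM
        |>.of_isCoprime_of_dvd_right hM'
    have hprod : ∏ j, red (g j) ∣ red G := Fintype.prod_dvd_of_coprime hcop hdv
    have hmG : (red G).Monic := hGm.map _
    have hle := natDegree_le_of_dvd hprod hmG.ne_zero
    have hmg : ∀ j, (red (g j)).Monic := fun j => (hgm j).map _
    rw [natDegree_prod_of_monic _ _ (fun j _ => hmg j)] at hle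
    have e1 : ∀ j, (red (g j)).natDegree = r j := fun j => by
      rw [← hgd j]; exact (hgm j).natDegree_map _
    have e2 : (red G).natDegree = k := by
      rw [← hGd]; exact hGm.natDegree_map _
    rw [e2] at hle
    simpa [e1] using hle
  · intro hle
    refine T.mono_left ?_ hle
    have hmon : (∏ j, g j).Monic := monic_prod_of_monic _ _ fun j _ => hgm j
    have hdeg : (∏ j, g j).natDegree = ∑ j, r j := by
      rw [natDegree_prod_of_monic _ _ (fun j _ => hgm j)]
      simp [hgd]
    refine ⟨Polynomial.C (X ^ b) * ∏ j, g j, ?_, ?_, ?_⟩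
    · rw [Ideal.mem_iInf]
      intro j
      rw [← Finset.mul_prod_erase _ _ (Finset.mem_univ j), ← mul_assoc, C_pow]
      exact (I j).mul_mem_right _ (hgI j)
    · exact (natDegree_C_mul_le _ _).trans hdeg.le
    · rw [coeff_C_mul, ← hdeg, hmon.coeff_natDegree, mul_one]

/-! ### Transfer -/

/-- `ℂ[x₁, x₂] ≃ ℂ[x₂][x₁]`. -/
def φ : MvPolynomial (Fin 2) ℂ ≃+* ℂ[X][X] :=
  (MvPolynomial.finSuccEquiv ℂ 1).toRingEquiv.trans
    (Polynomial.mapEquiv (MvPolynomial.uniqueAlgEquiv ℂ (Fin 1)).toRingEquiv)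

theorem coeff_φ (f : MvPolynomial (Fin 2) ℂ) (d : Fin 2 →₀ ℕ) :
    ((φ f).coeff (d 0)).coeff (d 1) = f.coeff d := by
  have : (φ f).coeff (d 0) = MvPolynomial.uniqueAlgEquiv ℂ (Fin 1)
      ((MvPolynomial.finSuccEquiv ℂ 1 f).coeff (d 0)) := by
    simp [φ]
  rw [this, MvPolynomial.coeff_uniqueAlgEquiv, MvPolynomial.finSuccEquiv_coeff_coeff]
  congr 1
  ext i
  fin_cases i
  · simp
  · show (Finsupp.cons (d 0) (Finsupp.single (default : Fin 1) (d 1)) : Fin 2 →₀ ℕ) (Fin.succ 0) = _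
    rw [Finsupp.cons_succ]
    simp

theorem φ_X0 : φ (MvPolynomial.X 0) = X := by
  have : MvPolynomial.finSuccEquiv ℂ 1 (MvPolynomial.X 0) = X := MvPolynomial.finSuccEquiv_X_zero
  simp [φ, this]

theorem φ_X1 : φ (MvPolynomial.X 1) = Polynomial.C X := by
  have : MvPolynomial.finSuccEquiv ℂ 1 (MvPolynomial.X 1) = Polynomial.C (MvPolynomial.X 0) :=
    MvPolynomial.finSuccEquiv_X_succ (j := 0)
  simp [φ, this]

theorem φ_C (a : ℂ) : φ (MvPolynomial.C a) = Polynomial.C (Polynomial.C a) := by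
  simp [φ, MvPolynomial.finSuccEquiv_apply]

/-- Pull an ideal back to `ℂ[x₂][x₁]`. -/
def tr (I : Ideal (MvPolynomial (Fin 2) ℂ)) : Ideal ℂ[X][X] := I.comap φ.symm

theorem mem_tr {I : Ideal (MvPolynomial (Fin 2) ℂ)} {f : MvPolynomial (Fin 2) ℂ} :
    φ f ∈ tr I ↔ f ∈ I := by
  simp [tr]

theorem mem_support_iff' (f : MvPolynomial (Fin 2) ℂ) (d : Fin 2 →₀ ℕ) :
    d ∈ f.support ↔ ((φ f).coeff (d 0)).coeff (d 1) ≠ 0 := by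
  rw [MvPolynomial.mem_support_iff, coeff_φ]

theorem exists_d (a b : ℕ) : ∃ d : Fin 2 →₀ ℕ, d 0 = a ∧ d 1 = b :=
  ⟨Finsupp.equivFunOnFinite.symm ![a, b], by simp, by simp⟩

theorem leadSet_iff {I : Ideal (MvPolynomial (Fin 2) ℂ)} {N : ℕ}
    (hN : Polynomial.C (X ^ N) ∈ tr I) (k b : ℕ) : (k, b) ∈ leadSet I ↔ T (tr I) k b := by
  constructor
  · rintro ⟨f, hf, -, ⟨d, hd, hdα⟩, hmax⟩
    rw [mem_support_iff'] at hd
    simp only [expPair, Prod.mk.injEq] at hdα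
    obtain ⟨rfl, rfl⟩ := hdα
    have hall : ∀ i l, ((φ f).coeff i).coeff l ≠ 0 → i < d 0 ∨ i = d 0 ∧ l ≤ d 1 := by
      intro i l h
      obtain ⟨d', rfl, rfl⟩ := exists_d i l
      have := hmax d' ((mem_support_iff' f d').2 h)
      rw [Prod.Lex.toLex_le_toLex] at this
      simpa [expPair] using this
    have hdeg : (φ f).natDegree ≤ d 0 := by
      rw [natDegree_le_iff_coeff_eq_zero]
      intro i hi
      ext l
      by_contra h
      have := hall i l (by simpa using h)
      omega
    have hne : (φ f).coeff (d 0) ≠ 0 := fun h => hd (by rw [h, Polynomial.coeff_zero])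
    obtain ⟨b', hb', -, hT⟩ := T_of_mem hN (mem_tr.2 hf) hdeg hne
    refine hT.mono_right (hb'.trans ?_)
    rw [natDegree_le_iff_coeff_eq_zero]
    intro l hl
    by_contra h
    have := hall (d 0) l h
    omega
  · rintro ⟨F, hF, hFd, hFc⟩
    obtain ⟨f, rfl⟩ := φ.surjective F
    obtain ⟨d, rfl, rfl⟩ := exists_d k b
    have hd : d ∈ f.support := by
      rw [mem_support_iff', hFc]
      simp
    refine ⟨f, mem_tr.1 hF, ?_, ⟨d, hd, rfl⟩, ?_⟩
    · rintro rfl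
      simp at hd
    · intro d' hd'
      rw [mem_support_iff'] at hd'
      rw [Prod.Lex.toLex_le_toLex]
      have h1 : d' 0 ≤ d 0 := by
        by_contra h
        rw [coeff_eq_zero_of_natDegree_lt (p := φ f) (by omega)] at hd'
        simp at hd'
      rcases h1.lt_or_eq with h | h
      · exact Or.inl h
      · refine Or.inr ⟨h, ?_⟩
        rw [h, hFc, coeff_X_pow] at hd'
        have : d' 1 = d 1 := by simpa using hd'
        exact this.le

theorem exists_pow {I : Ideal (MvPolynomial (Fin 2) ℂ)} {l : ℂ} (h : zeroSet I = {(l, 0)})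
    (f : MvPolynomial (Fin 2) ℂ) (hf : MvPolynomial.eval ![l, 0] f = 0) : ∃ n, f ^ n ∈ I := by
  have : f ∈ I.radical := by
    rw [← MvPolynomial.vanishingIdeal_zeroLocus_eq_radical (K := ℂ),
      MvPolynomial.mem_vanishingIdeal_iff]
    intro x hx
    have hx2 : (x 0, x 1) ∈ zeroSet I := by
      intro p hp
      have := hx p hp
      have e : ![x 0, x 1] = x := by
        ext i; fin_cases i <;> rfl
      simpa [e, MvPolynomial.aeval_eq_eval] using this
    rw [h, Set.mem_singleton_iff, Prod.mk.injEq] at hx2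
    have e : x = ![l, 0] := by
      ext i; fin_cases i
      · exact hx2.1
      · exact hx2.2
    rw [e]
    simpa [MvPolynomial.aeval_eq_eval] using hf
  exact this

theorem row {Δ : Set (ℕ × ℕ)} (hs : IsStandardSet Δ) (hf : Δ.Finite) (b k : ℕ) :
    (k, b) ∈ Δᶜ ↔ ({β ∈ Δ | β.2 = b}).ncard ≤ k := by
  classical
  have hex : ∃ k, (k, b) ∉ Δ := by
    by_contra! h
    exact (Set.infinite_of_injective_forall_mem (f := fun k : ℕ => (k, b))
      (fun a a' h => (Prod.mk.inj h).1) h) hf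
  have hup : ∀ i, (i, b) ∈ Δ ↔ i < Nat.find hex := by
    intro i
    constructor
    · intro hi
      by_contra h
      have := hs _ (Nat.find_spec hex) (i - Nat.find hex, 0)
      apply this
      have e : (Nat.find hex, b) + (i - Nat.find hex, 0) = (i, b) := by
        ext
        · simp; omega
        · simp
      rw [e]; exact hi
    · intro h
      have := Nat.find_min hex h
      exact not_not.1 this
  have hset : {β ∈ Δ | β.2 = b} = (fun i : ℕ => (i, b)) '' (Finset.range (Nat.find hex) : Set ℕ) := by
    ext ⟨i, l⟩
    simp only [Set.mem_sep_iff, Set.mem_image, Finset.coe_range, Set.mem_Iio, Prod.mk.injEq]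
    constructor
    · rintro ⟨h, rfl⟩
      exact ⟨i, (hup i).1 h, rfl, rfl⟩
    · rintro ⟨i, h, rfl, rfl⟩
      exact ⟨(hup _).2 h, rfl⟩
  rw [hset, Set.ncard_image_of_injective _ (fun a a' h => (Prod.mk.inj h).1),
    Set.ncard_coe_finset, Finset.card_range, Set.mem_compl_iff, hup, not_lt]

end

end C4

/-- Proposition: C4 addition in the first direction computes the lex Gröbner deformation
of an intersection of ideals supported at distinct points of the x₁-axis. -/
theorem stmt13 (m : ℕ) (I : Fin (m + 1) → Ideal (MvPolynomial (Fin 2) ℂ))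
    (Δ : Fin (m + 1) → Set (ℕ × ℕ)) (lam : Fin (m + 1) → ℂ)
    (hstd : ∀ j, IsStandardSet (Δ j)) (hfin : ∀ j, (Δ j).Finite)
    (hcolen : ∀ j, FiniteDimensional ℂ (MvPolynomial (Fin 2) ℂ ⧸ I j))
    (hin : ∀ j, leadSet (I j) = (Δ j)ᶜ)
    (hsupp : ∀ j, zeroSet (I j) = {(lam j, 0)})
    (hdist : Function.Injective lam) :
    leadSet (⨅ j, I j) =
      {α : ℕ × ℕ | α.1 < ∑ j, ({β ∈ Δ j | β.2 = α.2}).ncard}ᶜ := by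
  have hN : ∀ j, ∃ N, Polynomial.C (Polynomial.X ^ N) ∈ C4.tr (I j) := fun j => by
    obtain ⟨n, hn⟩ := C4.exists_pow (hsupp j) (MvPolynomial.X 1) (by simp)
    refine ⟨n, ?_⟩
    have := C4.mem_tr.2 hn
    rwa [map_pow, C4.φ_X1, ← Polynomial.C_pow] at this
  choose N hN using hN
  have hN' : ∀ j, ∃ M, (Polynomial.X - Polynomial.C (Polynomial.C (lam j))) ^ M ∈ C4.tr (I j) :=
    fun j => by
      obtain ⟨n, hn⟩ := C4.exists_pow (hsupp j) (MvPolynomial.X 0 - MvPolynomial.C (lam j))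
        (by simp)
      refine ⟨n, ?_⟩
      have := C4.mem_tr.2 hn
      rwa [map_pow, map_sub, C4.φ_X0, C4.φ_C] at this
  have htr : C4.tr (⨅ j, I j) = ⨅ j, C4.tr (I j) := Ideal.comap_iInf _ _
  have hNI : Polynomial.C (Polynomial.X ^ (∑ j, N j)) ∈ C4.tr (⨅ j, I j) := by
    rw [htr, Ideal.mem_iInf]
    intro j
    rw [← Finset.add_sum_erase _ _ (Finset.mem_univ j), pow_add, Polynomial.C_mul]
    exact (C4.tr (I j)).mul_mem_right _ (hN j)
  ext ⟨k, b⟩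
  rw [C4.leadSet_iff hNI, htr, C4.main (fun j => C4.tr (I j)) lam hdist N hN hN' b
    (fun j => ({β ∈ Δ j | β.2 = b}).ncard)]
  · simp
  · intro j k
    rw [← C4.leadSet_iff (hN j), hin, C4.row (hstd j) (hfin j)]
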